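/- Let X be a compact metric space of finite covering dimension, let n be a positive integer, let r ∈ ℕ, and let k, l ∈ ℕ satisfy k ≤ n and k − l ≥ 4·dim(X) + 4r. Let S = { a ∈ M_n(C(X)) : a is positive and l ≤ rank(a(x)) ≤ k for all x ∈ X } with the supremum-norm topology. Then any two continuous maps from the r-sphere S^r into S are homotopic through maps into S; in particular every continuous map S^r → S is homotopic within S to a constant map, so the homotopy group π_r(S) vanishes. -/

import Mathlib

open scoped ComplexOrder unitInterval

/-- `X` has Lebesgue covering dimension at most `d`: every open cover admits an open
refinement in which every point belongs to at most `d + 1` members. -/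
def HasCovDimLE (X : Type*) [TopologicalSpace X] (d : ℕ) : Prop :=
  ∀ 𝒰 : Set (Set X), (∀ U ∈ 𝒰, IsOpen U) → ⋃₀ 𝒰 = Set.univ →
    ∃ 𝒱 : Set (Set X), (∀ V ∈ 𝒱, IsOpen V) ∧ ⋃₀ 𝒱 = Set.univ ∧
      (∀ V ∈ 𝒱, ∃ U ∈ 𝒰, V ⊆ U) ∧
      ∀ x : X, {V ∈ 𝒱 | x ∈ V}.Finite ∧ {V ∈ 𝒱 | x ∈ V}.ncard ≤ d + 1

/-- `X` has Lebesgue covering dimension exactly `d`: `d` is the least natural number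
such that `HasCovDimLE X d`. -/
def IsCovDim (X : Type*) [TopologicalSpace X] (d : ℕ) : Prop :=
  HasCovDimLE X d ∧ ∀ e : ℕ, HasCovDimLE X e → d ≤ e

/-!
Let `K ⊆ E` be compact and `a` a map from `K × X` to positive matrices with ranks in `[l, k]`.
Suppose `p` is a map to positive matrices with `range (p z) ∩ ker (a z) = 0`, and `q` is a `k × n`
matrix with `rank (q * p z) ≥ l` for all `z`. Then `q * p * a` has rank in `[l, k]`, and the
segment from `a` to `(q * p * a)ᴴ * (q * p * a)` consists of left multiples of `a`, at time `t`
bounded below by `(1 - t) • a`, so its ranks stay in `[l, k]`. Moving `p` and `a` linearly to `1`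
inside `q * p * a` then ends at the constant `qᴴ * q`. So two maps `a` that share the same `q` are
homotopic.

To find `q`, cover `X` with multiplicity `d + 1` and approximate `a` by a self-adjoint `h` whose
values lie in finitely many `C¹` families of `finrank E + d` real parameters. For a small `c` with
`‖h - a‖ < c`, the positive part `p = (h - c)⁺` lies in finitely many locally Lipschitz families.
It has rank at least `l`, and its range avoids `ker a` because `h ≥ c` on that range. If `q` lowers
the rank of a member `γ e` of such a family below `l`, then `q` kills a nonzero vector that depends
on `e` and on at most `l - 1` further scalars, so by a dimension count the bad `q` have Hausdorff
dimension less than that of the space of all `q`. Hence a generic `q` serves both maps at once.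
-/

open Matrix Module Set Topology

section Rank

variable {K m n o : Type*} [Field K] [Fintype o]

lemma rank_le_rank_of_ker_le {A : Matrix m o K} {B : Matrix n o K}
    (h : LinearMap.ker B.mulVecLin ≤ LinearMap.ker A.mulVecLin) : A.rank ≤ B.rank := by
  have hA := LinearMap.finrank_range_add_finrank_ker A.mulVecLin
  have hB := LinearMap.finrank_range_add_finrank_ker B.mulVecLin
  have hker := Submodule.finrank_mono h
  rw [Matrix.rank, Matrix.rank]
  omega

lemma rank_mul_eq_right_of_disjoint [Fintype n] {A : Matrix m n K} {B : Matrix n o K}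
    (h : Disjoint (LinearMap.range B.mulVecLin) (LinearMap.ker A.mulVecLin)) :
    (A * B).rank = B.rank := by
  refine (rank_mul_le_right A B).antisymm (rank_le_rank_of_ker_le fun z hz => ?_)
  rw [mulVecLin_mul, LinearMap.mem_ker, LinearMap.comp_apply] at hz
  exact LinearMap.disjoint_ker.1 h _ ⟨z, rfl⟩ hz

lemma exists_eq_submatrix_mul [Finite m] (B : Matrix m o K) :
    ∃ (J : Fin B.rank → o) (Z : Matrix (Fin B.rank) o K), B = B.submatrix id J * Z := by
  rw [rank_eq_finrank_span_cols]
  obtain ⟨f, hf, hspan, -⟩ := Submodule.exists_fun_fin_finrank_span_eq K (range B.col)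
  choose J hJ using hf
  have hcol (j : o) : ∃ z, B.submatrix id J *ᵥ z = B.col j := by
    have hj : B.col j ∈ LinearMap.range (B.submatrix id J).mulVecLin := by
      rw [range_mulVecLin, show (B.submatrix id J).col = f from funext hJ, hspan]
      exact Submodule.subset_span (mem_range_self j)
    exact hj
  choose z hz using hcol
  refine ⟨J, (of z)ᵀ, ext_col fun j => ?_⟩
  exact (hz j).symm

lemma exists_col_sub_mulVec_ne_zero_of_rank_mul_lt [Finite m] [Fintype n] {q : Matrix m n K}
    {A : Matrix n o K} (h : (q * A).rank < A.rank) :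
    ∃ (J : Fin (q * A).rank → o) (j : o) (z : Fin (q * A).rank → K),
      A.col j - A.submatrix id J *ᵥ z ≠ 0 ∧ q *ᵥ (A.col j - A.submatrix id J *ᵥ z) = 0 := by
  obtain ⟨J, Z, hZ⟩ := exists_eq_submatrix_mul (q * A)
  have hA : A ≠ A.submatrix id J * Z := fun hA => h.not_ge <| calc
    A.rank = (A.submatrix id J * Z).rank := congrArg rank hA
    _ ≤ (A.submatrix id J).rank := rank_mul_le_left _ _
    _ ≤ (q * A).rank := (rank_le_card_width _).trans_eq (Fintype.card_fin _)
  obtain ⟨j, hj⟩ : ∃ j, A.col j ≠ A.submatrix id J *ᵥ Z.col j := by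
    by_contra! hcol
    exact hA (ext_col hcol)
  refine ⟨J, j, Z.col j, sub_ne_zero.2 hj, ?_⟩
  calc q *ᵥ (A.col j - A.submatrix id J *ᵥ Z.col j)
      = (q * A).col j - ((q * A).submatrix id J * Z).col j := by
        rw [mulVec_sub, mulVec_mulVec]; rfl
    _ = 0 := by rw [← hZ, sub_self]

end Rank

section PosSemidefRank

variable {𝕜 n : Type*} [RCLike 𝕜] [Fintype n]

lemma isOpen_setOf_le_rank (l : ℕ) : IsOpen {A : Matrix n n 𝕜 | l ≤ A.rank} := by
  classical
  let L : Matrix n n 𝕜 →ₗ[𝕜] (n → 𝕜) →L[𝕜] (n → 𝕜) :=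
    LinearMap.toContinuousLinearMap.toLinearMap ∘ₗ mulVecBilin 𝕜 𝕜
  have hL (A : Matrix n n 𝕜) : l ≤ A.rank ↔ (l : Cardinal) ≤ (L A).rank := by
    rw [Matrix.rank, ← Nat.cast_le (α := Cardinal), finrank_eq_rank]
    rfl
  simp only [hL]
  exact (isOpen_setOfPred_nat_le_rank l).preimage L.continuous_of_finiteDimensional

lemma rank_mul_mul_eq_of_disjoint {m : Type*} [Finite m] {P A : Matrix n n 𝕜}
    (hP : P.IsHermitian) (hA : A.IsHermitian)
    (h : Disjoint (LinearMap.range P.mulVecLin) (LinearMap.ker A.mulVecLin)) (q : Matrix m n 𝕜) :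
    (q * P * A).rank = (q * P).rank := by
  have := Fintype.ofFinite m
  have hdisj : Disjoint (LinearMap.range (P * qᴴ).mulVecLin) (LinearMap.ker A.mulVecLin) := by
    rw [mulVecLin_mul]
    exact h.mono_left (LinearMap.range_comp_le_range _ _)
  calc (q * P * A).rank = ((q * P * A)ᴴ).rank := (rank_conjTranspose _).symm
    _ = (A * (P * qᴴ)).rank := by rw [conjTranspose_mul, conjTranspose_mul, hP.eq, hA.eq]
    _ = (P * qᴴ).rank := rank_mul_eq_right_of_disjoint hdisj
    _ = ((q * P)ᴴ).rank := by rw [conjTranspose_mul, hP.eq]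
    _ = (q * P).rank := rank_conjTranspose _

lemma rank_le_rank_add_of_posSemidef {A B : Matrix n n 𝕜} (hA : A.PosSemidef)
    (hB : B.PosSemidef) : A.rank ≤ (A + B).rank := by
  refine rank_le_rank_of_ker_le fun z hz => (hA.dotProduct_mulVec_zero_iff z).1 ?_
  have hsum : star z ⬝ᵥ (A *ᵥ z) + star z ⬝ᵥ (B *ᵥ z) = 0 := by
    rw [← dotProduct_add, ← add_mulVec, ← mulVecLin_apply, LinearMap.mem_ker.1 hz,
      dotProduct_zero]
  exact ((add_eq_zero_iff_of_nonneg (hA.dotProduct_mulVec_nonneg z)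
    (hB.dotProduct_mulVec_nonneg z)).1 hsum).1

/-- The positive semidefinite matrices whose rank lies between `l` and `k`. -/
def posSemidefRankIcc (𝕜 n : Type*) [RCLike 𝕜] [Fintype n] (l k : ℕ) : Set (Matrix n n 𝕜) :=
  {A | A.PosSemidef ∧ A.rank ∈ Icc l k}

variable {l k : ℕ}

lemma conjTranspose_mul_self_mem_posSemidefRankIcc {m : Type*} [Fintype m] {B : Matrix m n 𝕜}
    (hB : B.rank ∈ Icc l k) : Bᴴ * B ∈ posSemidefRankIcc 𝕜 n l k :=
  ⟨posSemidef_conjTranspose_mul_self B, by rwa [rank_conjTranspose_mul_self]⟩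

lemma smul_add_smul_mem_posSemidefRankIcc {m : Type*} [Fintype m] {A : Matrix n n 𝕜}
    {B : Matrix m n 𝕜} (hA : A ∈ posSemidefRankIcc 𝕜 n l k) (hBA : l ≤ (B * A).rank) (t : I) :
    (1 - t : ℝ) • A + (t : ℝ) • ((B * A)ᴴ * (B * A)) ∈ posSemidefRankIcc 𝕜 n l k := by
  classical
  have hA' : ((1 - t : ℝ) • A).PosSemidef := hA.1.smul (sub_nonneg.2 t.2.2)
  have hB' : ((t : ℝ) • ((B * A)ᴴ * (B * A))).PosSemidef :=
    (posSemidef_conjTranspose_mul_self _).smul t.2.1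
  refine ⟨hA'.add hB', ?_, ?_⟩
  · rcases eq_or_ne (1 - t : ℝ) 0 with ht | ht
    · rw [ht, zero_smul, zero_add, ← sub_eq_zero.1 ht, one_smul, rank_conjTranspose_mul_self]
      exact hBA
    · have hrank : ((1 - t : ℝ) • A).rank = A.rank := by
        rw [RCLike.real_smul_eq_coe_smul (K := 𝕜)]
        exact rank_smul_of_mem_nonZeroDivisors _
          (mem_nonZeroDivisors_of_ne_zero (RCLike.ofReal_ne_zero.2 ht))
      exact hA.2.1.trans (hrank.ge.trans (rank_le_rank_add_of_posSemidef hA' hB'))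
  · have hfactor : (1 - t : ℝ) • A + (t : ℝ) • ((B * A)ᴴ * (B * A)) =
        ((1 - t : ℝ) • 1 + (t : ℝ) • ((B * A)ᴴ * B)) * A := by
      rw [add_mul, smul_mul, smul_mul, one_mul, Matrix.mul_assoc]
    rw [hfactor]
    exact (rank_mul_le_right _ _).trans hA.2.2

lemma rank_mul_smul_add_smul_one [DecidableEq n] {m : Type*} {A : Matrix n n 𝕜}
    (hA : A.PosSemidef) (B : Matrix m n 𝕜) {t : I} (ht : t ≠ 0) :
    (B * ((1 - t : ℝ) • A + (t : ℝ) • 1)).rank = B.rank := by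
  have ht' : (0 : ℝ) < t := unitInterval.pos_iff_ne_zero.2 ht
  have hpos : ((1 - t : ℝ) • A + (t : ℝ) • (1 : Matrix n n 𝕜)).PosDef :=
    (PosDef.one.smul ht').posSemidef_add (hA.smul (sub_nonneg.2 t.2.2))
  exact rank_mul_eq_left_of_isUnit_det _ _ ((isUnit_iff_isUnit_det _).1 hpos.isUnit)

end PosSemidefRank

section Homotopy

variable {𝕜 n X Y Z : Type*} [RCLike 𝕜] [Fintype n] [TopologicalSpace X] [TopologicalSpace Y]
  [TopologicalSpace Z] {l k : ℕ}

lemma homotopicWith_of_uncurry [LocallyCompactSpace X] {f g : C(Y, C(X, Z))} {T : Set Z}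
    (h : f.uncurry.HomotopicWith g.uncurry fun φ => ∀ w, φ w ∈ T) :
    f.HomotopicWith g fun φ => ∀ y x, φ y x ∈ T := by
  obtain ⟨H⟩ := h
  exact ⟨{ toContinuousMap :=
             (H.toContinuousMap.comp (.mk (Homeomorph.prodAssoc I Y X))).curry
           map_zero_left := fun y => ContinuousMap.ext fun x => H.apply_zero (y, x)
           map_one_left := fun y => ContinuousMap.ext fun x => H.apply_one (y, x)
           prop' := fun t y x => H.prop t (y, x) }⟩

lemma homotopicWith_conjTranspose_mul_self {a p : C(Z, Matrix n n 𝕜)}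
    (ha : ∀ z, a z ∈ posSemidefRankIcc 𝕜 n l k)
    (hp : ∀ z, (p z).PosSemidef)
    (hdisj : ∀ z, Disjoint (LinearMap.range (p z).mulVecLin) (LinearMap.ker (a z).mulVecLin))
    (q : Matrix (Fin k) n 𝕜) (hq : ∀ z, l ≤ (q * p z).rank) :
    a.HomotopicWith (.const Z (qᴴ * q)) fun φ => ∀ z, φ z ∈ posSemidefRankIcc 𝕜 n l k := by
  classical
  have hqpa (z : Z) : l ≤ (q * p z * a z).rank :=
    (hq z).trans (rank_mul_mul_eq_of_disjoint (hp z).1 (ha z).1.1 (hdisj z) q).ge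
  let m : C(Z, Matrix n n 𝕜) :=
    ⟨fun z => (q * p z * a z)ᴴ * (q * p z * a z), by fun_prop⟩
  have hcompress : a.HomotopicWith m fun φ => ∀ z, φ z ∈ posSemidefRankIcc 𝕜 n l k :=
    ⟨{ toFun := fun w => (1 - w.1 : ℝ) • a w.2 +
         (w.1 : ℝ) • ((q * p w.2 * a w.2)ᴴ * (q * p w.2 * a w.2))
       continuous_toFun := by fun_prop
       map_zero_left := by simp
       map_one_left := by simp [m]
       prop' := fun t z => smul_add_smul_mem_posSemidefRankIcc (ha z) (hqpa z) t }⟩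
  refine hcompress.trans ⟨?_⟩
  exact
    { toFun := fun w =>
        (q * ((1 - w.1 : ℝ) • p w.2 + (w.1 : ℝ) • 1) * ((1 - w.1 : ℝ) • a w.2 + (w.1 : ℝ) • 1))ᴴ *
        (q * ((1 - w.1 : ℝ) • p w.2 + (w.1 : ℝ) • 1) * ((1 - w.1 : ℝ) • a w.2 + (w.1 : ℝ) • 1))
      continuous_toFun := by fun_prop
      map_zero_left := by simp [m]
      map_one_left := by simp
      prop' := fun t z => by
        refine conjTranspose_mul_self_mem_posSemidefRankIcc
          ⟨?_, (rank_le_card_height _).trans_eq (Fintype.card_fin k)⟩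
        rcases eq_or_ne t 0 with rfl | ht
        · simpa using hqpa z
        · rw [rank_mul_smul_add_smul_one (ha z).1 _ ht, rank_mul_smul_add_smul_one (hp z) _ ht]
          exact (hq z).trans (rank_mul_le_left _ _) }

end Homotopy

section Genericity

open scoped Matrix.Norms.Frobenius

variable {𝕜 n κ P : Type*} [RCLike 𝕜] [Fintype n] [Fintype κ] [NormedAddCommGroup P]
  [NormedSpace ℝ P] [FiniteDimensional ℝ P]

lemma exists_lipschitzOnWith_comp_of_contDiffAt {V W α : Type*} [NormedAddCommGroup V]
    [NormedSpace ℝ V] [NormedAddCommGroup W] [NormedSpace ℝ W] [PseudoEMetricSpace α]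
    {f : V → W} {g : α → V} {x : α} (hf : ContDiffAt ℝ 1 f (g x)) (hg : LocallyLipschitz g) :
    ∃ C, ∃ t ∈ 𝓝 x, LipschitzOnWith C (f ∘ g) t := by
  obtain ⟨C, t, ht, hC⟩ := hf.exists_lipschitzOnWith
  obtain ⟨C', t', ht', hC'⟩ := hg x
  exact ⟨C * C', t' ∩ g ⁻¹' t, Filter.inter_mem ht' (hg.continuous.continuousAt ht),
    hC.comp (hC'.mono inter_subset_left) fun _ hy => hy.2⟩

section CompleteOrthogonal

variable [DecidableEq n] {i : n}

/-- The vector `u` with `u ⬝ᵥ w = 0` whose coordinates away from `i` are given by `v`, when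
`w i ≠ 0`. It parametrizes the hyperplane orthogonal to `w`. -/
noncomputable def completeOrthogonal (i : n) (w : n → 𝕜) (v : {a // a ≠ i} → 𝕜) : n → 𝕜 :=
  fun a => if h : a = i then -(∑ b, v b * w b) / w i else v ⟨a, h⟩

lemma completeOrthogonal_restrict {w u : n → 𝕜} (hw : w i ≠ 0) (hu : u ⬝ᵥ w = 0) :
    completeOrthogonal i w (fun a => u a) = u := by
  funext a
  by_cases h : a = i
  · subst h
    rw [dotProduct, Fintype.sum_eq_add_sum_subtype_ne _ a] at hu
    rw [completeOrthogonal, dif_pos rfl, div_eq_iff hw]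
    exact (eq_neg_of_add_eq_zero_left hu).symm
  · exact dif_neg h

lemma contDiffAt_completeOrthogonal {w : n → 𝕜} (v : {a // a ≠ i} → 𝕜) (hw : w i ≠ 0) :
    ContDiffAt ℝ 1 (fun p : (n → 𝕜) × ({a // a ≠ i} → 𝕜) => completeOrthogonal i p.1 p.2)
      (w, v) := by
  refine contDiffAt_pi.2 fun a => ?_
  by_cases h : a = i
  · simp only [completeOrthogonal, h, dif_pos, div_eq_mul_inv]
    refine ContDiffAt.mul ?_ (ContDiffAt.inv ?_ hw) <;> fun_prop
  · simp only [completeOrthogonal, h, dif_neg, not_false_eq_true]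
    fun_prop

lemma exists_lipschitzOnWith_completeOrthogonal {α : Type*} [PseudoEMetricSpace α]
    {w : α → n → 𝕜} (hw : LocallyLipschitz w) {x : α × (κ → {a // a ≠ i} → 𝕜)}
    (hx : w x.1 i ≠ 0) :
    ∃ C, ∃ t ∈ 𝓝 x,
      LipschitzOnWith C (fun y b => completeOrthogonal i (w y.1) (y.2 b) : _ → κ → n → 𝕜) t := by
  have hsmooth : ContDiffAt ℝ 1 (fun y : (n → 𝕜) × (κ → {a // a ≠ i} → 𝕜) =>
      fun b => completeOrthogonal i y.1 (y.2 b)) (w x.1, x.2) := by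
    refine contDiffAt_pi.2 fun b => ?_
    exact (contDiffAt_completeOrthogonal (x.2 b) hx).comp (w x.1, x.2)
      (f := fun y : (n → 𝕜) × (κ → {a // a ≠ i} → 𝕜) => (y.1, y.2 b)) (by fun_prop)
  exact exists_lipschitzOnWith_comp_of_contDiffAt
    (g := fun y : α × (κ → {a // a ≠ i} → 𝕜) => (w y.1, y.2)) hsmooth
    ((hw.comp LipschitzWith.prod_fst.locallyLipschitz).prodMk
      LipschitzWith.prod_snd.locallyLipschitz)

end CompleteOrthogonal

lemma dimH_setOf_mulVec_eq_zero_le {w : P → n → 𝕜} (hw : LocallyLipschitz w) :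
    dimH {q : κ → n → 𝕜 | ∃ p, w p ≠ 0 ∧ of q *ᵥ w p = 0} ≤
      (finrank ℝ P + Fintype.card κ * (Fintype.card n - 1) * finrank ℝ 𝕜 : ℕ) := by
  classical
  let Ψ (i : n) (x : P × (κ → {a // a ≠ i} → 𝕜)) : κ → n → 𝕜 :=
    fun b => completeOrthogonal i (w x.1) (x.2 b)
  have hcover : {q : κ → n → 𝕜 | ∃ p, w p ≠ 0 ∧ of q *ᵥ w p = 0} ⊆
      ⋃ i, Ψ i '' {x | w x.1 i ≠ 0} := by
    rintro q ⟨p, hp, hq⟩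
    obtain ⟨i, hi⟩ := Function.ne_iff.1 hp
    exact mem_iUnion.2 ⟨i, (p, fun b a => q b a), hi,
      funext fun b => completeOrthogonal_restrict hi (congrFun hq b)⟩
  have hdim (i : n) : finrank ℝ (P × (κ → {a // a ≠ i} → 𝕜)) =
      finrank ℝ P + Fintype.card κ * (Fintype.card n - 1) * finrank ℝ 𝕜 := by
    simp [finrank_pi_fintype, Fintype.card_subtype_compl, mul_assoc]
  refine (dimH_mono hcover).trans ((dimH_iUnion _).trans_le (iSup_le fun i => ?_))
  calc dimH (Ψ i '' {x | w x.1 i ≠ 0}) ≤ dimH {x : P × (κ → {a // a ≠ i} → 𝕜) | w x.1 i ≠ 0} :=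
        dimH_image_le_of_locally_lipschitzOn fun x hx => by
          obtain ⟨C, t, ht, hC⟩ := exists_lipschitzOnWith_completeOrthogonal hw hx
          exact ⟨C, t, mem_nhdsWithin_of_mem_nhds ht, hC⟩
    _ ≤ dimH (univ : Set (P × (κ → {a // a ≠ i} → 𝕜))) := dimH_mono (subset_univ _)
    _ = _ := by rw [Real.dimH_univ_eq_finrank, hdim]

lemma contDiff_col_sub_submatrix_mulVec {m o : Type*} [Fintype m] [Fintype o] (J : m → o) (j : o) :
    ContDiff ℝ 1 fun y : Matrix n o 𝕜 × (m → 𝕜) => y.1.col j - y.1.submatrix id J *ᵥ y.2 := by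
  have hentry (a : n) (b : o) : ContDiff ℝ 1 fun y : Matrix n o 𝕜 × (m → 𝕜) => y.1 a b :=
    (LinearMap.toContinuousLinearMap (entryLinearMap ℝ 𝕜 a b)).contDiff.comp contDiff_fst
  exact contDiff_pi.2 fun a => (hentry a j).sub <|
    ContDiff.sum fun i _ => (hentry a (J i)).mul (contDiff_apply ℝ 𝕜 i |>.comp contDiff_snd)

variable {o : Type*} [Fintype o]

lemma dimH_setOf_rank_mul_le_le {γ : P → Matrix n o 𝕜} (hγ : LocallyLipschitz γ) (m : ℕ) :
    dimH {q : κ → n → 𝕜 | ∃ p, m < (γ p).rank ∧ (of q * γ p).rank ≤ m} ≤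
      (finrank ℝ P + m * finrank ℝ 𝕜 +
        Fintype.card κ * (Fintype.card n - 1) * finrank ℝ 𝕜 : ℕ) := by
  let w (d : ℕ) (J : Fin d → o) (j : o) (y : P × (Fin d → 𝕜)) : n → 𝕜 :=
    (γ y.1).col j - (γ y.1).submatrix id J *ᵥ y.2
  have hw (d : ℕ) (J : Fin d → o) (j : o) : LocallyLipschitz (w d J j) :=
    (contDiff_col_sub_submatrix_mulVec J j).locallyLipschitz.comp
      ((hγ.comp LipschitzWith.prod_fst.locallyLipschitz).prodMk
        LipschitzWith.prod_snd.locallyLipschitz)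
  have hcover : {q : κ → n → 𝕜 | ∃ p, m < (γ p).rank ∧ (of q * γ p).rank ≤ m} ⊆
      ⋃ (d : Fin (m + 1)) (J : Fin d → o) (j : o),
        {q | ∃ y, w d J j y ≠ 0 ∧ of q *ᵥ w d J j y = 0} := by
    rintro q ⟨p, hp, hq⟩
    obtain ⟨J, j, z, hz, hqz⟩ := exists_col_sub_mulVec_ne_zero_of_rank_mul_lt (hq.trans_lt hp)
    simp only [mem_iUnion]
    exact ⟨⟨_, Nat.lt_succ_of_le hq⟩, J, j, (p, z), hz, hqz⟩
  refine (dimH_mono hcover).trans ?_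
  simp only [dimH_iUnion]
  refine iSup_le fun d => iSup_le fun J => iSup_le fun j =>
    (dimH_setOf_mulVec_eq_zero_le (hw d J j)).trans ?_
  rw [finrank_prod, finrank_pi_fintype, Finset.sum_const, Finset.card_fin, smul_eq_mul]
  gcongr
  exact Nat.le_of_lt_succ d.2

lemma exists_forall_le_rank_mul {G : Set (P → Matrix n o 𝕜)} (hG : G.Countable)
    (hlip : ∀ γ ∈ G, LocallyLipschitz γ) {l : ℕ}
    (hdim : finrank ℝ P + finrank ℝ 𝕜 * l < finrank ℝ 𝕜 * (Fintype.card κ + 1)) :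
    ∃ q : Matrix κ n 𝕜, ∀ γ ∈ G, ∀ p, l ≤ (γ p).rank → l ≤ (q * γ p).rank := by
  rcases l with - | m
  · exact ⟨0, fun _ _ _ _ => Nat.zero_le _⟩
  rcases isEmpty_or_nonempty n with hn | hn
  · exact ⟨0, fun γ _ p hp => absurd (hp.trans (rank_le_card_height _)) (by simp)⟩
  have hbad : dimH (⋃ γ ∈ G, {q : κ → n → 𝕜 | ∃ p, m < (γ p).rank ∧ (of q * γ p).rank ≤ m}) <
      finrank ℝ (κ → n → 𝕜) := by
    rw [dimH_bUnion hG]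
    refine (iSup₂_le fun γ hγ => dimH_setOf_rank_mul_le_le (hlip γ hγ) m).trans_lt ?_
    obtain ⟨N, hN⟩ := Nat.exists_eq_succ_of_ne_zero (Fintype.card_ne_zero (α := n))
    simp only [finrank_pi_fintype, Finset.sum_const, Finset.card_univ, smul_eq_mul, hN]
    norm_cast
    rw [Nat.succ_sub_one]
    linarith
  obtain ⟨q, hq⟩ := (dense_compl_of_dimH_lt_finrank hbad).nonempty
  refine ⟨of q, fun γ hγ p hp => ?_⟩
  by_contra! hlt
  exact hq (mem_biUnion hγ ⟨p, hp, Nat.le_of_lt_succ hlt⟩)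

end Genericity

section PositivePart

open scoped Matrix.Norms.Frobenius MatrixOrder

variable {𝕜 m n : Type*} [RCLike 𝕜] [Fintype m] [Fintype n]

lemma frobenius_norm_sq (A : Matrix m n 𝕜) : ‖A‖ ^ 2 = ∑ i, ∑ j, ‖A i j‖ ^ 2 := by
  simp only [frobenius_norm_def, ← Real.sqrt_eq_rpow, Real.rpow_two]
  exact Real.sq_sqrt (by positivity)

lemma frobenius_norm_le_of_norm_le {A B : Matrix m n 𝕜} (h : ∀ i j, ‖A i j‖ ≤ ‖B i j‖) :
    ‖A‖ ≤ ‖B‖ := by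
  rw [frobenius_norm_def, frobenius_norm_def]
  gcongr
  exact h _ _

lemma ofReal_frobenius_norm_sq (A : Matrix m n 𝕜) : ((‖A‖ ^ 2 : ℝ) : 𝕜) = (Aᴴ * A).trace := by
  rw [frobenius_norm_sq, Finset.sum_comm]
  simp [trace, mul_apply, RCLike.conj_mul]

lemma norm_toLp_mulVec_le (A : Matrix m n 𝕜) (x : n → 𝕜) :
    ‖WithLp.toLp 2 (A *ᵥ x)‖ ≤ ‖A‖ * ‖WithLp.toLp 2 x‖ := by
  simpa only [← replicateCol_mulVec, frobenius_norm_replicateCol]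
    using frobenius_norm_mul A (replicateCol Unit x)

lemma eq_zero_of_mulVec_eq_smul_add {M P : Matrix n n 𝕜} (hP : P.PosSemidef) {c : ℝ}
    (hM : ‖M‖ < c) {x : n → 𝕜} (hx : M *ᵥ x = c • x + P *ᵥ x) : x = 0 := by
  have hlower : c * ‖WithLp.toLp 2 x‖ ^ 2 ≤
      RCLike.re (inner 𝕜 (WithLp.toLp 2 x) (WithLp.toLp 2 (M *ᵥ x))) := by
    rw [hx, WithLp.toLp_add, WithLp.toLp_smul, inner_add_right,
      RCLike.real_smul_eq_coe_smul (K := 𝕜) c, inner_smul_right, inner_self_eq_norm_sq_to_K,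
      map_add, EuclideanSpace.inner_toLp_toLp, dotProduct_comm]
    have hPx := hP.re_dotProduct_nonneg x
    norm_cast
    simpa using hPx
  have hupper := (RCLike.re_le_norm _).trans <|
    (norm_inner_le_norm (𝕜 := 𝕜) (WithLp.toLp 2 x) (WithLp.toLp 2 (M *ᵥ x))).trans <|
      mul_le_mul_of_nonneg_left (norm_toLp_mulVec_le _ _) (norm_nonneg _)
  by_contra hx0
  have hpos : 0 < ‖WithLp.toLp 2 x‖ := norm_pos_iff.2 (by simpa using hx0)
  nlinarith [mul_pos hpos hpos]

variable [DecidableEq n]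

lemma frobenius_norm_unitary_mul (U : unitaryGroup n 𝕜) (A : Matrix n m 𝕜) :
    ‖(U : Matrix n n 𝕜) * A‖ = ‖A‖ := by
  have hU : (U : Matrix n n 𝕜)ᴴ * U = 1 := Unitary.coe_star_mul_self U
  have hsq : ‖(U : Matrix n n 𝕜) * A‖ ^ 2 = ‖A‖ ^ 2 := by
    rw [← RCLike.ofReal_inj (K := 𝕜), ofReal_frobenius_norm_sq, ofReal_frobenius_norm_sq,
      conjTranspose_mul, Matrix.mul_assoc, ← Matrix.mul_assoc _ _ A, hU, Matrix.one_mul]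
  exact (sq_eq_sq₀ (norm_nonneg _) (norm_nonneg _)).1 hsq

lemma frobenius_norm_mul_unitary (A : Matrix m n 𝕜) (U : unitaryGroup n 𝕜) :
    ‖A * (U : Matrix n n 𝕜)‖ = ‖A‖ := by
  rw [← frobenius_norm_conjTranspose, conjTranspose_mul, ← star_eq_conjTranspose (U : Matrix n n 𝕜),
    ← Unitary.coe_star, frobenius_norm_unitary_mul, frobenius_norm_conjTranspose]

lemma frobenius_norm_conj_diagonal_sub (U V : unitaryGroup n 𝕜) (D E : n → 𝕜) :
    ‖(U * diagonal D * star U - V * diagonal E * star V : Matrix n n 𝕜)‖ =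
      ‖(diagonal D * (star U * V) - star U * V * diagonal E : Matrix n n 𝕜)‖ := by
  have hU : (star U * U : Matrix n n 𝕜) = 1 := Unitary.coe_star_mul_self U
  have hV : (star V * V : Matrix n n 𝕜) = 1 := Unitary.coe_star_mul_self V
  rw [← frobenius_norm_unitary_mul (star U), ← frobenius_norm_mul_unitary _ V]
  congr 1
  calc (star U * (U * diagonal D * star U - V * diagonal E * star V) * V : Matrix n n 𝕜)
      = star U * U * diagonal D * (star U * V) - star U * V * diagonal E * (star V * V) := by
        noncomm_ring
    _ = diagonal D * (star U * V) - star U * V * diagonal E := by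
        rw [hU, hV, one_mul, mul_one]

lemma frobenius_norm_diagonal_mul_sub_le {D E D' E' : n → 𝕜} {C : ℝ} (hC : 0 ≤ C)
    (h : ∀ i j, ‖D' i - E' j‖ ≤ C * ‖D i - E j‖) (M : Matrix n n 𝕜) :
    ‖diagonal D' * M - M * diagonal E'‖ ≤ C * ‖diagonal D * M - M * diagonal E‖ := by
  have hentry (D E : n → 𝕜) (i j : n) :
      ‖(diagonal D * M - M * diagonal E) i j‖ = ‖D i - E j‖ * ‖M i j‖ := by
    rw [Matrix.sub_apply, diagonal_mul, mul_diagonal, mul_comm (M i j), ← sub_mul, norm_mul]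
  rw [← Real.norm_of_nonneg hC, ← norm_smul]
  refine frobenius_norm_le_of_norm_le fun i j => ?_
  rw [Matrix.smul_apply, norm_smul, hentry, hentry, Real.norm_of_nonneg hC, ← mul_assoc]
  exact mul_le_mul_of_nonneg_right (h i j) (norm_nonneg _)

lemma lipschitzOnWith_cfc {f : ℝ → ℝ} {C : NNReal} (hf : LipschitzWith C f) :
    LipschitzOnWith C (cfc f) {A : Matrix n n 𝕜 | A.IsHermitian} := by
  refine LipschitzOnWith.of_dist_le_mul fun A hA B hB => ?_
  let M : Matrix n n 𝕜 := star hA.eigenvectorUnitary * hB.eigenvectorUnitary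
  have hsub (g : ℝ → ℝ) : ‖cfc g A - cfc g B‖ =
      ‖diagonal (fun i => (g (hA.eigenvalues i) : 𝕜)) * M -
        M * diagonal (fun i => (g (hB.eigenvalues i) : 𝕜))‖ := by
    rw [hA.cfc_eq, hB.cfc_eq]
    exact frobenius_norm_conj_diagonal_sub _ _ _ _
  have hid : ‖A - B‖ = ‖diagonal (fun i => (hA.eigenvalues i : 𝕜)) * M -
      M * diagonal (fun i => (hB.eigenvalues i : 𝕜))‖ := by
    have h := hsub id
    rwa [cfc_id ℝ A hA.isSelfAdjoint, cfc_id ℝ B hB.isSelfAdjoint] at h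
  rw [dist_eq_norm, dist_eq_norm, hsub, hid]
  refine frobenius_norm_diagonal_mul_sub_le C.2 (fun i j => ?_) M
  rw [← RCLike.ofReal_sub, ← RCLike.ofReal_sub, RCLike.norm_ofReal, RCLike.norm_ofReal]
  exact hf.dist_le_mul _ _

lemma lipschitzOnWith_posPart :
    LipschitzOnWith 1 (fun A : Matrix n n 𝕜 => A⁺) {A : Matrix n n 𝕜 | A.IsHermitian} := by
  have hcfc {A : Matrix n n 𝕜} : A⁺ = cfc (fun x : ℝ => x⁺) A := by
    rw [CFC.posPart_def, cfcₙ_eq_cfc]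
  simpa only [hcfc] using lipschitzOnWith_cfc (𝕜 := 𝕜) (n := n) (lipschitzWith_posPart (α := ℝ))

lemma lipschitzWith_posPart_sub_smul_one (c : ℝ) :
    LipschitzWith 1 fun A : selfAdjoint (Matrix n n 𝕜) => ((A : Matrix n n 𝕜) - c • 1)⁺ := by
  refine LipschitzWith.of_dist_le_mul fun A B => ?_
  have hsub (A : selfAdjoint (Matrix n n 𝕜)) : IsSelfAdjoint ((A : Matrix n n 𝕜) - c • 1) :=
    A.2.sub ((IsSelfAdjoint.all c).smul (IsSelfAdjoint.one _))
  simpa [Subtype.dist_eq] using lipschitzOnWith_posPart.dist_le_mul _ (hsub A) _ (hsub B)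

lemma disjoint_range_posPart_ker {A H : Matrix n n 𝕜} (hH : H.IsHermitian) {c : ℝ}
    (hHA : ‖H - A‖ < c) :
    Disjoint (LinearMap.range ((H - c • 1)⁺ : Matrix n n 𝕜).mulVecLin)
      (LinearMap.ker A.mulVecLin) := by
  set P : Matrix n n 𝕜 := (H - c • 1)⁺
  have hHP : H * P = c • P + P * P := by
    have hHc : IsSelfAdjoint (H - c • 1 : Matrix n n 𝕜) :=
      hH.isSelfAdjoint.sub ((IsSelfAdjoint.all c).smul (IsSelfAdjoint.one _))
    have h : (H - c • 1) * P = P * P := by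
      conv_lhs => rw [← CFC.posPart_sub_negPart (H - c • 1) hHc]
      rw [sub_mul, CFC.negPart_mul_posPart, sub_zero]
    rw [← h, sub_mul, smul_mul_assoc, one_mul, add_sub_cancel]
  rw [Submodule.disjoint_def]
  rintro _ ⟨z, rfl⟩ hker
  simp only [LinearMap.mem_ker, mulVecLin_apply] at hker ⊢
  have hP : P.PosSemidef := nonneg_iff_posSemidef.1 (CFC.posPart_nonneg _)
  refine eq_zero_of_mulVec_eq_smul_add hP hHA ?_
  rw [sub_mulVec, hker, sub_zero, mulVec_mulVec, hHP, add_mulVec, smul_mulVec, ← mulVec_mulVec]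

lemma norm_posPart_sub_le {A H : Matrix n n 𝕜} (hA : A.PosSemidef) (hH : H.IsHermitian) (c : ℝ) :
    ‖(H - c • 1)⁺ - A‖ ≤ ‖H - A‖ + |c| * ‖(1 : Matrix n n 𝕜)‖ := by
  have hHc : (H - c • 1 : Matrix n n 𝕜).IsHermitian :=
    hH.isSelfAdjoint.sub ((IsSelfAdjoint.all c).smul (IsSelfAdjoint.one _))
  calc ‖(H - c • 1)⁺ - A‖ = ‖(H - c • 1)⁺ - A⁺‖ := by
        rw [(CFC.posPart_eq_self A).2 hA.nonneg]
    _ ≤ ‖H - c • 1 - A‖ := by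
        simpa [dist_eq_norm] using lipschitzOnWith_posPart.dist_le_mul _ hHc _ hA.isHermitian
    _ = ‖H - A - c • 1‖ := by rw [sub_right_comm]
    _ ≤ ‖H - A‖ + |c| * ‖(1 : Matrix n n 𝕜)‖ :=
        (norm_sub_le _ _).trans_eq (by rw [norm_smul, Real.norm_eq_abs])

end PositivePart

section AffineFrameMap

variable {E F : Type*} [AddCommGroup F] [Module ℝ F] {d : ℕ}

/-- The map sending `(s, t)` to the point with coordinates `t` in the affine frame
`β 0 s, …, β d s`. It depends on `finrank E + d` real parameters and reaches all affine
combinations of `d + 1` given functions. -/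
def affineFrameMap (β : Fin (d + 1) → E → F) (e : E × (Fin d → ℝ)) : F :=
  β 0 e.1 + ∑ j : Fin d, e.2 j • (β j.succ e.1 - β 0 e.1)

lemma exists_affineFrameMap_eq_sum_smul {ι : Type*} {S : Finset ι} (hS : S.card ≤ d + 1)
    {w : ι → ℝ} (hw : ∑ i ∈ S, w i = 1) :
    ∃ (τ : Fin (d + 1) → ι) (t : Fin d → ℝ), ∀ (B : ι → E → F) (s : E),
      affineFrameMap (B ∘ τ) (s, t) = ∑ i ∈ S, w i • B i s := by
  classical
  obtain ⟨i₀, hi₀⟩ : S.Nonempty := Finset.nonempty_of_sum_ne_zero (hw.trans_ne one_ne_zero)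
  obtain ⟨e⟩ : Nonempty (S.erase i₀ ↪ Fin d) := Function.Embedding.nonempty_of_card_le (by
    rw [Fintype.card_coe, Fintype.card_fin, Finset.card_erase_of_mem hi₀]; lia)
  refine ⟨Fin.cons i₀ (Function.extend e (↑) fun _ => i₀),
    Function.extend e (fun i => w i) 0, fun B s => ?_⟩
  have hsum : ∑ i : S.erase i₀, w i • (B i s - B i₀ s) =
      ∑ j, Function.extend e (fun i : S.erase i₀ => w i) 0 j •
        (B (Function.extend e (↑) (fun _ => i₀) j) s - B i₀ s) :=
    Fintype.sum_of_injective e e.injective _ _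
      (fun j hj => by rw [Function.extend_apply' _ _ _ hj, Pi.zero_apply, zero_smul])
      (fun i => by rw [e.injective.extend_apply, e.injective.extend_apply])
  calc affineFrameMap _ _ = B i₀ s + ∑ i : S.erase i₀, w i • (B i s - B i₀ s) := by
        simp only [affineFrameMap, Function.comp_apply, Fin.cons_zero, Fin.cons_succ, hsum]
    _ = B i₀ s + ∑ i ∈ S, w i • (B i s - B i₀ s) := by
        rw [Finset.sum_coe_sort _ fun i => w i • (B i s - B i₀ s), Finset.sum_erase _ (by simp)]
    _ = ∑ i ∈ S, w i • B i s := by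
        simp only [smul_sub, Finset.sum_sub_distrib]
        rw [← Finset.sum_smul, hw, one_smul, add_sub_cancel]

end AffineFrameMap

section CoveringDimension

variable {X : Type*} [TopologicalSpace X] [CompactSpace X] [T2Space X] {d : ℕ}

lemma HasCovDimLE.exists_partitionOfUnity (hd : HasCovDimLE X d) {ι : Type*} {U : ι → Set X}
    (hUo : ∀ i, IsOpen (U i)) (hU : ⋃ i, U i = univ) :
    ∃ (T : Finset (Set X)) (φ : PartitionOfUnity T X) (c : T → ι),
      (∀ x, (φ.finsupport x).card ≤ d + 1) ∧ ∀ V x, φ V x ≠ 0 → x ∈ U (c V) := by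
  obtain ⟨𝒱, h𝒱o, h𝒱, href, hord⟩ := hd (range U) (forall_mem_range.2 hUo) (by rwa [sUnion_range])
  obtain ⟨t, ht𝒱, htfin, htcov⟩ := isCompact_univ.elim_finite_subcover_image
    (b := 𝒱) (c := id) h𝒱o (by rw [← h𝒱, sUnion_eq_biUnion]; rfl)
  have hT (V : htfin.toFinset) : (V : Set X) ∈ 𝒱 := ht𝒱 (htfin.mem_toFinset.1 V.2)
  obtain ⟨φ, hφ⟩ := PartitionOfUnity.exists_isSubordinate isClosed_univ
    (fun V : htfin.toFinset => (V : Set X)) (fun V => h𝒱o V (hT V)) (fun x hx => by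
      obtain ⟨V, hV, hxV⟩ := mem_iUnion₂.1 (htcov hx)
      exact mem_iUnion.2 ⟨⟨V, htfin.mem_toFinset.2 hV⟩, hxV⟩)
  have hmem {V x} (h : φ V x ≠ 0) : x ∈ (V : Set X) := hφ V (subset_closure h)
  have hsub (V : htfin.toFinset) : ∃ i, (V : Set X) ⊆ U i := by
    obtain ⟨_, ⟨i, rfl⟩, hi⟩ := href V (hT V)
    exact ⟨i, hi⟩
  choose c hc using hsub
  refine ⟨htfin.toFinset, φ, c, fun x => ?_, fun V x h => hc V (hmem h)⟩
  rw [← Finset.card_map (.subtype (· ∈ htfin.toFinset)), ← ncard_coe_finset]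
  refine (ncard_le_ncard (fun W hW => ?_) (hord x).1).trans (hord x).2
  obtain ⟨V, hV, rfl⟩ := Finset.mem_map.1 hW
  exact ⟨hT V, hmem ((φ.mem_finsupport x).1 hV)⟩

variable {E F : Type*} [NormedAddCommGroup E] [NormedSpace ℝ E] [NormedAddCommGroup F]
  [NormedSpace ℝ F]

lemma contDiff_affineFrameMap {m : WithTop ℕ∞} {β : Fin (d + 1) → E → F}
    (hβ : ∀ j, ContDiff ℝ m (β j)) : ContDiff ℝ m (affineFrameMap β) := by
  unfold affineFrameMap
  fun_prop

variable [FiniteDimensional ℝ E] [FiniteDimensional ℝ F] {K : Set E}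

lemma exists_contDiff_dist_lt_of_isClosed (hK : IsClosed K) (u : C(K, F)) (m : ℕ∞) {ε : ℝ}
    (hε : 0 < ε) : ∃ B : E → F, ContDiff ℝ m B ∧ ∀ s : K, dist (B s) (u s) < ε := by
  have : TietzeExtension F := .of_tvs ℝ
  obtain ⟨v, rfl⟩ := ContinuousMap.exists_restrict_eq hK u
  obtain ⟨B, hB, hBv, -⟩ :=
    v.continuous.exists_contDiff_approx m (ε := fun _ => ε) continuous_const fun _ => hε
  exact ⟨B, hB, fun s => hBv s⟩

lemma HasCovDimLE.exists_dist_lt_and_mem_range (hd : HasCovDimLE X d) (hK : IsCompact K)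
    (a : C(K × X, F)) (m : ℕ∞) {ε : ℝ} (hε : 0 < ε) :
    ∃ G : Set (E × (Fin d → ℝ) → F), G.Finite ∧ (∀ γ ∈ G, ContDiff ℝ m γ) ∧
      ∃ h : C(K × X, F), ∀ z, dist (h z) (a z) < ε ∧ ∃ γ ∈ G, h z ∈ range γ := by
  have : CompactSpace K := isCompact_iff_compactSpace.1 hK
  let u : C(X, C(K, F)) := (a.comp .prodSwap).curry
  obtain ⟨T, φ, c, hφ, hc⟩ := hd.exists_partitionOfUnity
    (U := fun x => u ⁻¹' Metric.ball (u x) (ε / 2))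
    (fun x => Metric.isOpen_ball.preimage u.continuous)
    (eq_univ_of_forall fun x => mem_iUnion.2 ⟨x, Metric.mem_ball_self (half_pos hε)⟩)
  choose B hB hBu using fun V =>
    exists_contDiff_dist_lt_of_isClosed hK.isClosed (u (c V)) m (half_pos hε)
  refine ⟨range fun τ : Fin (d + 1) → T => affineFrameMap (B ∘ τ), finite_range _,
    forall_mem_range.2 fun τ => contDiff_affineFrameMap fun j => hB (τ j),
    ⟨fun z => ∑ V, φ V z.2 • B V z.1, ?_⟩, fun ⟨s, x⟩ => ⟨?_, ?_⟩⟩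
  · have hBc V := (hB V).continuous
    fun_prop
  · have hclose V (hV : φ V x ≠ 0) : B V s ∈ Metric.ball (a (s, x)) ε := by
      have hu : dist (u (c V) s) (a (s, x)) < ε / 2 := by
        rw [dist_comm]
        exact (ContinuousMap.dist_apply_le_dist s).trans_lt (hc V x hV)
      exact (dist_triangle _ _ _).trans_lt ((add_lt_add (hBu V s) hu).trans_eq (add_halves ε))
    have hmem := φ.finsum_smul_mem_convex (g := fun V _ => B V s) (mem_univ x) hclose
      (convex_ball _ _)
    rwa [finsum_eq_sum_of_fintype] at hmem
  · obtain ⟨τ, t, hτ⟩ := exists_affineFrameMap_eq_sum_smul (E := E) (F := F) (hφ x)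
      (φ.sum_finsupport (mem_univ x))
    refine ⟨_, mem_range_self τ, (s, t), (hτ B s).trans ?_⟩
    rw [φ.sum_finsupport_smul_eq_finsum fun V _ => B V s, finsum_eq_sum_of_fintype]
    rfl

end CoveringDimension

section GenericCompression

open scoped Matrix.Norms.Frobenius MatrixOrder

variable {𝕜 n X E : Type*} [RCLike 𝕜] [Fintype n] [TopologicalSpace X] [CompactSpace X]
  [T2Space X] [NormedAddCommGroup E] [NormedSpace ℝ E] [FiniteDimensional ℝ E] {K : Set E}
  {d l k : ℕ}

lemma HasCovDimLE.exists_cutoff_mem_range (hd : HasCovDimLE X d) (hK : IsCompact K)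
    {a : C(K × X, Matrix n n 𝕜)} (ha : ∀ z, (a z).PosSemidef) (hl : ∀ z, l ≤ (a z).rank) :
    ∃ G : Set (E × (Fin d → ℝ) → Matrix n n 𝕜), G.Finite ∧ (∀ γ ∈ G, LocallyLipschitz γ) ∧
      ∃ p : C(K × X, Matrix n n 𝕜), ∀ z, (p z).PosSemidef ∧ l ≤ (p z).rank ∧
        Disjoint (LinearMap.range (p z).mulVecLin) (LinearMap.ker (a z).mulVecLin) ∧
        ∃ γ ∈ G, p z ∈ range γ := by
  classical
  have : CompactSpace K := isCompact_iff_compactSpace.1 hK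
  obtain ⟨η, hη, hηl⟩ := (isCompact_range a.continuous).exists_thickening_subset_open
    (isOpen_setOf_le_rank l) (range_subset_iff.2 hl)
  obtain ⟨c, hc, hcη⟩ : ∃ c : ℝ, 0 < c ∧ c * (1 + ‖(1 : Matrix n n 𝕜)‖) < η := by
    refine ⟨η / (2 * (1 + ‖(1 : Matrix n n 𝕜)‖)), by positivity, ?_⟩
    field_simp
    norm_num
  let F := selfAdjoint.submodule ℝ (Matrix n n 𝕜)
  obtain ⟨G, hGfin, hG, h, hh⟩ := hd.exists_dist_lt_and_mem_range hK
    (⟨fun z => ⟨a z, (ha z).isHermitian⟩, by fun_prop⟩ : C(K × X, F)) 1 hc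
  have hnorm (z) : ‖(h z : Matrix n n 𝕜) - a z‖ < c := by
    rw [← dist_eq_norm]
    exact (hh z).1
  let cut (A : F) : Matrix n n 𝕜 := ((A : Matrix n n 𝕜) - c • 1)⁺
  have hcut : LipschitzWith 1 cut := lipschitzWith_posPart_sub_smul_one c
  refine ⟨(cut ∘ ·) '' G, hGfin.image _, forall_mem_image.2 fun γ hγ =>
    hcut.locallyLipschitz.comp (hG γ hγ).locallyLipschitz,
    ⟨cut ∘ h, hcut.continuous.comp h.continuous⟩,
    fun z => ⟨nonneg_iff_posSemidef.1 (CFC.posPart_nonneg _), ?_,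
      disjoint_range_posPart_ker (h z).2 (hnorm z), ?_⟩⟩
  · refine hηl (Metric.mem_thickening_iff.2 ⟨a z, mem_range_self z, ?_⟩)
    rw [dist_eq_norm]
    refine (norm_posPart_sub_le (ha z) (h z).2 c).trans_lt ?_
    rw [abs_of_pos hc]
    linarith [hnorm z]
  · obtain ⟨-, γ, hγ, e, he⟩ := hh z
    exact ⟨cut ∘ γ, mem_image_of_mem _ hγ, e, congrArg cut he⟩

lemma HasCovDimLE.exists_finite_forall_homotopicWith_const (hd : HasCovDimLE X d)
    (hK : IsCompact K) {a : C(K × X, Matrix n n 𝕜)}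
    (ha : ∀ z, a z ∈ posSemidefRankIcc 𝕜 n l k) :
    ∃ G : Set (E × (Fin d → ℝ) → Matrix n n 𝕜), G.Finite ∧ (∀ γ ∈ G, LocallyLipschitz γ) ∧
      ∀ q : Matrix (Fin k) n 𝕜, (∀ γ ∈ G, ∀ e, l ≤ (γ e).rank → l ≤ (q * γ e).rank) →
        a.HomotopicWith (.const _ (qᴴ * q)) fun φ => ∀ z, φ z ∈ posSemidefRankIcc 𝕜 n l k := by
  obtain ⟨G, hGfin, hG, p, hp⟩ :=
    hd.exists_cutoff_mem_range hK (fun z => (ha z).1) fun z => (ha z).2.1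
  refine ⟨G, hGfin, hG, fun q hq => homotopicWith_conjTranspose_mul_self ha
    (fun z => (hp z).1) (fun z => (hp z).2.2.1) q fun z => ?_⟩
  obtain ⟨-, hl, -, γ, hγ, e, he⟩ := hp z
  rw [← he] at hl ⊢
  exact hq γ hγ e hl

end GenericCompression

theorem stmt5_general {𝕜 n X E : Type*} [RCLike 𝕜] [Fintype n] [TopologicalSpace X]
    [CompactSpace X] [T2Space X] [NormedAddCommGroup E] [NormedSpace ℝ E] [FiniteDimensional ℝ E]
    {K : Set E} (hK : IsCompact K) {d l k : ℕ} (hd : HasCovDimLE X d)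
    (hdim : finrank ℝ E + d + finrank ℝ 𝕜 * l < finrank ℝ 𝕜 * (k + 1))
    (f g : C(K, C(X, Matrix n n 𝕜))) (hf : ∀ s x, f s x ∈ posSemidefRankIcc 𝕜 n l k)
    (hg : ∀ s x, g s x ∈ posSemidefRankIcc 𝕜 n l k) :
    f.HomotopicWith g fun φ => ∀ s x, φ s x ∈ posSemidefRankIcc 𝕜 n l k := by
  obtain ⟨G₁, hG₁, hlip₁, hhom₁⟩ := hd.exists_finite_forall_homotopicWith_const hK
    (a := f.uncurry) fun z => hf z.1 z.2
  obtain ⟨G₂, hG₂, hlip₂, hhom₂⟩ := hd.exists_finite_forall_homotopicWith_const hK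
    (a := g.uncurry) fun z => hg z.1 z.2
  obtain ⟨q, hq⟩ := exists_forall_le_rank_mul (κ := Fin k) (l := l) (hG₁.union hG₂).countable
    (fun γ hγ => hγ.elim (hlip₁ γ) (hlip₂ γ)) (by simpa using hdim)
  exact homotopicWith_of_uncurry <|
    (hhom₁ q fun γ hγ => hq γ (.inl hγ)).trans (hhom₂ q fun γ hγ => hq γ (.inr hγ)).symm

/-- On a compact metric space `X` of finite covering dimension `d`, with
`k ≤ n` and `k - l ≥ 4d + 4r`, any two continuous maps from the `r`-sphere into the set
`S` of positive elements of `M_n(C(X))` with pointwise rank in `[l, k]` are homotopic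
through maps into `S`; in particular `π_r(S)` vanishes. -/
theorem stmt5 {X : Type*} [MetricSpace X] [CompactSpace X] (d : ℕ) (hdim : IsCovDim X d)
    (n l k r : ℕ) (hn : 0 < n) (hkn : k ≤ n) (hlk : l + 4 * d + 4 * r ≤ k)
    (S : Set C(X, Matrix (Fin n) (Fin n) ℂ))
    (hS : S = {c : C(X, Matrix (Fin n) (Fin n) ℂ) |
      (∀ x, (c x).PosSemidef) ∧ ∀ x, l ≤ (c x).rank ∧ (c x).rank ≤ k})
    (f g : C(Metric.sphere (0 : EuclideanSpace ℝ (Fin (r + 1))) 1,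
      C(X, Matrix (Fin n) (Fin n) ℂ)))
    (hf : ∀ s, f s ∈ S) (hg : ∀ s, g s ∈ S) :
    ∃ H : C(I × Metric.sphere (0 : EuclideanSpace ℝ (Fin (r + 1))) 1,
        C(X, Matrix (Fin n) (Fin n) ℂ)),
      (∀ s, H (0, s) = f s) ∧ (∀ s, H (1, s) = g s) ∧ ∀ t s, H (t, s) ∈ S := by
  simp only [hS, mem_ofPred_eq, ← forall_and] at hf hg ⊢
  obtain ⟨H⟩ := stmt5_general (isCompact_sphere _ _) (l := l) (k := k) hdim.1
    (by rw [finrank_euclideanSpace_fin, Complex.finrank_real_complex]; lia) f g hf hg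
  exact ⟨H.toContinuousMap, H.apply_zero, H.apply_one, H.prop⟩
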